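/- arXiv:1906.10751 — 2 statements merged into one kernel-verified Lean document; each statement's English description precedes it below -/
import Mathlib

section
/- Let μ ∈ ℝ, σ > 0, and t ∈ ℝ with 0 ≤ 4σ²t < 1. Then μ²t/(1 − 2σ²t) = −(μ²/(4σ²)) ln(1 − 4σ²t) − g(t), where g(t) = (μ²/(4σ²)) Σ_{k=3}^∞ (1 − k/2^{k−1}) (4σ²t)^k / k and the series converges absolutely. -/
open Real

/-- Series decomposition of the non-central part of the CGF:
for `0 ≤ 4σ²t < 1`,
`μ²t/(1 - 2σ²t) = -(μ²/(4σ²)) ln(1 - 4σ²t) - g(t)` where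
`g(t) = (μ²/(4σ²)) Σ_{k≥3} (1 - k/2^(k-1)) (4σ²t)^k / k`, the series being
absolutely convergent. -/
theorem noncentral_cgf_series_decomposition
    (μ σ t : ℝ) (hσ : 0 < σ) (ht0 : 0 ≤ 4 * σ ^ 2 * t) (ht1 : 4 * σ ^ 2 * t < 1)
    (term : ℕ → ℝ)
    (hterm : term = fun k : ℕ =>
      (1 - ((k : ℝ) + 3) / 2 ^ (k + 2)) * (4 * σ ^ 2 * t) ^ (k + 3) / ((k : ℝ) + 3)) :
    Summable (fun k => |term k|) ∧
      μ ^ 2 * t / (1 - 2 * σ ^ 2 * t)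
        = -(μ ^ 2 / (4 * σ ^ 2)) * Real.log (1 - 4 * σ ^ 2 * t)
          - (μ ^ 2 / (4 * σ ^ 2)) * ∑' k, term k := by
  obtain ⟨x, hx⟩ : ∃ x, x = 4 * σ ^ 2 * t := ⟨_, rfl⟩
  have h2 : 2 * σ ^ 2 * t = x / 2 := by rw [hx]; ring
  rw [h2]
  rw [← hx] at ht0 ht1 hterm ⊢
  have hl := Real.hasSum_pow_div_log_of_abs_lt_one (x := x) (by rw [abs_of_nonneg ht0]; exact ht1)
  have hg := (hasSum_geometric_of_lt_one (r := x / 2) (by linarith) (by linarith)).mul_left x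
  have hs := (hasSum_nat_add_iff' 2).mpr (hl.sub hg)
  have hT : HasSum term (-Real.log (1 - x) - x * (1 - x / 2)⁻¹) := by
    convert hs using 1
    · rfl
    · rw [hterm]
      funext k
      have hk : (k : ℝ) + 3 ≠ 0 := by positivity
      have hk' : (k : ℝ) + 2 + 1 ≠ 0 := by positivity
      push_cast
      rw [div_pow, show (k : ℝ) + 2 + 1 = k + 3 by ring]
      field_simp
      ring
    · simp [Finset.sum_range_succ]
      ring
  refine ⟨hT.summable.abs, ?_⟩
  rw [hT.tsum_eq]
  have hne : 1 - x / 2 ≠ 0 := by linarith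
  have ht : t = x / (4 * σ ^ 2) := by rw [hx]; field_simp
  rw [ht]
  ring
end

section
/- Let μ ∈ ℝ with μ ≠ 0, σ > 0, and t ∈ ℝ with 0 < 4σ²t < 1, and set g(t) = (μ²/(4σ²)) Σ_{k=3}^∞ (1 − k/2^{k−1}) (4σ²t)^k / k. Then 0 ≤ g(t) < −4 μ² σ² t² ln(1 − 4σ² t); in particular g(t) = O(σ⁴) as σ → 0 for fixed t-range, so the remainder is of order n^{−2} when σ² = O(n^{−1}). -/
open Real

/-- Bound on the remainder of the CGF decomposition: for `μ ≠ 0`,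
`σ > 0` and `0 < 4σ²t < 1`, the remainder
`g(t) = (μ²/(4σ²)) Σ_{k≥3} (1 - k/2^(k-1)) (4σ²t)^k / k` satisfies
`0 ≤ g(t) < -4 μ² σ² t² ln(1 - 4σ²t)`. -/
theorem noncentral_cgf_remainder_bound
    (μ σ t : ℝ) (hμ : μ ≠ 0) (hσ : 0 < σ) (ht0 : 0 < 4 * σ ^ 2 * t)
    (ht1 : 4 * σ ^ 2 * t < 1) (g : ℝ)
    (hg : g = (μ ^ 2 / (4 * σ ^ 2)) * ∑' k : ℕ,
      (1 - ((k : ℝ) + 3) / 2 ^ (k + 2)) * (4 * σ ^ 2 * t) ^ (k + 3) / ((k : ℝ) + 3)) :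
    0 ≤ g ∧ g < -(4 * μ ^ 2 * σ ^ 2 * t ^ 2) * Real.log (1 - 4 * σ ^ 2 * t) := by
  have hs2 : 0 < 4 * σ ^ 2 := by positivity
  have hC : 0 < μ ^ 2 / (4 * σ ^ 2) := by positivity
  have hR : -(4 * μ ^ 2 * σ ^ 2 * t ^ 2) * Real.log (1 - 4 * σ ^ 2 * t)
      = (μ ^ 2 / (4 * σ ^ 2)) * ((4 * σ ^ 2 * t) ^ 2 * (-Real.log (1 - 4 * σ ^ 2 * t))) := by
    field_simp
  rw [hR, hg]
  generalize 4 * σ ^ 2 * t = x at *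
  have hsum := (Real.hasSum_pow_div_log_of_abs_lt_one
    (abs_lt.mpr ⟨by linarith, ht1⟩)).mul_left (x ^ 2)
  have hc : ∀ k : ℕ, ((k : ℝ) + 3) / 2 ^ (k + 2) ≤ 1 := by
    intro k
    rw [div_le_one (by positivity)]
    have h : k + 3 ≤ 2 ^ (k + 2) := Nat.lt_two_pow_self (n := k + 2)
    exact_mod_cast h
  have hnn : ∀ k : ℕ, 0 ≤ (1 - ((k : ℝ) + 3) / 2 ^ (k + 2)) * x ^ (k + 3) / ((k : ℝ) + 3) := by
    intro k
    have := sub_nonneg.mpr (hc k)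
    positivity
  have hlt : ∀ k : ℕ, (1 - ((k : ℝ) + 3) / 2 ^ (k + 2)) * x ^ (k + 3) / ((k : ℝ) + 3)
      < x ^ 2 * (x ^ (k + 1) / ((k : ℝ) + 1)) := by
    intro k
    have e : x ^ 2 * (x ^ (k + 1) / ((k : ℝ) + 1)) = x ^ (k + 3) / ((k : ℝ) + 1) := by ring
    rw [e]
    have hp : 0 < x ^ (k + 3) := by positivity
    have hd : 0 < ((k : ℝ) + 3) / 2 ^ (k + 2) := by positivity
    calc _ ≤ x ^ (k + 3) / ((k : ℝ) + 3) := by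
          gcongr
          nlinarith
      _ < _ := by
          gcongr
          norm_num
  have hS := Summable.of_nonneg_of_le hnn (fun k => (hlt k).le) hsum.summable
  refine ⟨mul_nonneg hC.le (tsum_nonneg hnn), mul_lt_mul_of_pos_left ?_ hC⟩
  rw [← hsum.tsum_eq]
  exact hS.tsum_lt_tsum (i := 0) (fun k => (hlt k).le) (hlt 0) hsum.summable
end
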